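/- arXiv:1206.4132 — 2 statements merged into one kernel-verified Lean document; each statement's English description precedes it below -/
import Mathlib

section
/- Let M be a C^∞-smooth real hypersurface germ at the origin in ℂ² with defining function ρ(z₁,z₂) = Re z₁ + P(z₂) + (Im z₁)·Q(z₂, Im z₁), where P and Q are C^∞-smooth with P(0)=0, dP(0)=0, Q(0,0)=0. If the D'Angelo type τ(M,0) = +∞, then there exists a sequence {aₙ}_{n=2}^∞ of complex numbers such that for each integer N ≥ 2 the holomorphic curve φ_N(t) = (−Σ_{j=2}^N a_j t^j, t) satisfies ν(ρ∘φ_N) ≥ N, where ν denotes the vanishing order at t = 0. -/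
/-!
The curve is improved one degree at a time. Suppose `p` is holomorphic, `p = o(t)`, and
`F(t) = ρ(p(t), t) = o(|t|ⁿ)`. By Taylor, `F = R + o(|t|ⁿ⁺¹)` with `R` homogeneous of degree
`N = n + 1`. Since `y Q(w, y)` has zero strict derivative at the origin,
`ρ(z₁ + g, w) = ρ(z₁, w) + Re g + o(g)`, so it suffices to find `c` with `R(t) = Re (c tᴺ)`:
then `ρ(p(t) - c tᴺ, t) = o(|t|ᴺ)`.

Infinite type gives a disc `h = (h₁, h₂)` of order `k` with `ρ ∘ h = o(|t|ᴺᵏ)`. Put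
`g = h₁ - p(h₂)`, so that `ρ ∘ h = F(h₂) + Re g + o(g)`. If `h₂ = o(tᵏ)`, the leading part of `g`
is `c₁ tᵏ` with `c₁ ≠ 0`, and `Re (c₁ tᵏ) = o(|t|ᵏ)` is absurd. Hence `h₂ = b tᵏ + o(tᵏ)` with
`b ≠ 0`. Comparing degrees below `Nk` the same way shows `g = e tᴺᵏ + o(tᴺᵏ)`, and dividing by
`sᴺᵏ` along a ray `t = sζ`, `s → 0⁺`, gives `R(b ζᵏ) = -Re (e ζᴺᵏ)`. As `b ζᵏ` ranges over all of
`ℂ`, this is `R(x) = Re (-(e / bᴺ) xᴺ)`. This is `exists_improvement`; the theorem iterates it from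
`p = 0`.

The vanishing order is defined through iterated Fréchet derivatives, whereas the argument uses
little-o estimates. `isLittleO_of_iteratedFDeriv_eq_zero` and `iteratedFDeriv_eq_zero_of_isLittleO`
translate between the two.
-/

open Complex Metric Filter Topology Asymptotics

/-- The Wirtinger derivative ∂f/∂z = (1/2)(∂f/∂x - i ∂f/∂y) of a function f : ℂ → ℂ. -/
noncomputable def wirtinger (f : ℂ → ℂ) (z : ℂ) : ℂ :=
  (1 / 2) * (fderiv ℝ f z 1 - Complex.I * fderiv ℝ f z Complex.I)

/-- The Wirtinger derivative of a real-valued function on ℂ. -/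
noncomputable def wirtingerR (f : ℂ → ℝ) (z : ℂ) : ℂ :=
  wirtinger (fun w => (f w : ℂ)) z

/-- Iterated Wirtinger derivative ∂^N/∂z^N. -/
noncomputable def wirtingerIter : ℕ → (ℂ → ℂ) → (ℂ → ℂ)
  | 0, f => f
  | n + 1, f => wirtinger (wirtingerIter n f)

/-- The Wirtinger derivative of ρ : ℂ × ℂ → ℝ in the first variable. -/
noncomputable def wirtinger1 (ρ : ℂ × ℂ → ℝ) (z : ℂ × ℂ) : ℂ :=
  wirtinger (fun w => (ρ (w, z.2) : ℂ)) z.1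

/-- The Wirtinger derivative of ρ : ℂ × ℂ → ℝ in the second variable. -/
noncomputable def wirtinger2 (ρ : ℂ × ℂ → ℝ) (z : ℂ × ℂ) : ℂ :=
  wirtinger (fun w => (ρ (z.1, w) : ℂ)) z.2

/-- The vanishing order ν(f) of a smooth function at 0: the least n such that the n-th
derivative of f at 0 is nonzero, and +∞ if all derivatives vanish at 0. -/
noncomputable def vanishOrder {E : Type*} [NormedAddCommGroup E] [NormedSpace ℝ E]
    (f : ℂ → E) : ℕ∞ :=
  sInf {m : ℕ∞ | ∃ n : ℕ, m = (n : ℕ∞) ∧ iteratedFDeriv ℝ n f 0 ≠ 0}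

/-- The origin is a point of D'Angelo infinite type for the hypersurface {ρ = 0}:
for every ℓ > 0 there is a holomorphic disc h through 0 with ν(h) finite and
ν(ρ ∘ h) / ν(h) > ℓ. -/
def IsInfiniteType (ρ : ℂ × ℂ → ℝ) : Prop :=
  ∀ ℓ : ℕ, 0 < ℓ → ∃ h : ℂ → ℂ × ℂ,
    DifferentiableOn ℂ h (Metric.ball 0 1) ∧ h 0 = 0 ∧
    vanishOrder h ≠ ⊤ ∧ (ℓ : ℕ∞) * vanishOrder h < vanishOrder (fun t => ρ (h t))

open scoped ContDiff Nat

/-! ### Vanishing order and little-o estimates -/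

lemma natCast_le_vanishOrder_iff {E : Type*} [NormedAddCommGroup E] [NormedSpace ℝ E]
    {f : ℂ → E} {N : ℕ} :
    (N : ℕ∞) ≤ vanishOrder f ↔ ∀ k < N, iteratedFDeriv ℝ k f 0 = 0 := by
  unfold vanishOrder
  constructor
  · intro h k hk
    by_contra hne
    have h1 : (N : ℕ∞) ≤ (k : ℕ∞) := h.trans (sInf_le ⟨k, rfl, hne⟩)
    exact absurd (by exact_mod_cast h1) (not_le.2 hk)
  · intro h
    refine le_sInf ?_
    rintro _ ⟨n, rfl, hn⟩
    by_contra hlt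
    exact hn (h n (by exact_mod_cast not_le.1 hlt))

lemma exists_vanishOrder_eq {E : Type*} [NormedAddCommGroup E] [NormedSpace ℝ E]
    {f : ℂ → E} (h : vanishOrder f ≠ ⊤) :
    ∃ k : ℕ, vanishOrder f = k ∧ iteratedFDeriv ℝ k f 0 ≠ 0 := by
  have hne : {m : ℕ∞ | ∃ n : ℕ, m = (n : ℕ∞) ∧ iteratedFDeriv ℝ n f 0 ≠ 0}.Nonempty := by
    by_contra hem
    apply h
    rw [vanishOrder, Set.not_nonempty_iff_eq_empty.1 hem, sInf_empty]
  exact csInf_mem hne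

/-- Taylor's formula at `0` for a function whose derivatives of order `< n` vanish there. -/
lemma taylor_leading {F : Type} [NormedAddCommGroup F] [NormedSpace ℝ F] [CompleteSpace F]
    {f : ℂ → F} (hf : ContDiffAt ℝ ∞ f 0) {n : ℕ}
    (h0 : ∀ k < n, iteratedFDeriv ℝ k f 0 = 0) :
    (fun y => f y - (n ! : ℝ)⁻¹ • iteratedFDeriv ℝ n f 0 (fun _ => y))
      =o[𝓝 0] fun y => ‖y‖ ^ n := by
  have hf1 : ContDiffAt ℝ ((n + 1 : ℕ) : WithTop ℕ∞) f 0 :=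
    hf.of_le (by exact_mod_cast le_top)
  have hev : ∀ᶠ y in 𝓝 (0 : ℂ), ContDiffAt ℝ ((n + 1 : ℕ) : WithTop ℕ∞) f y :=
    hf1.eventually (by simp)
  have hcont : ContinuousAt (iteratedFDeriv ℝ (n + 1) f) 0 := by
    exact hf1.continuousAt_iteratedFDeriv le_rfl
  have hbd : ∀ᶠ y in 𝓝 (0 : ℂ),
      ‖iteratedFDeriv ℝ (n + 1) f y‖ < ‖iteratedFDeriv ℝ (n + 1) f 0‖ + 1 :=
    hcont.norm.eventually_lt_const (lt_add_one _)
  set C := ‖iteratedFDeriv ℝ (n + 1) f 0‖ + 1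
  obtain ⟨r, hr, hball⟩ := Metric.eventually_nhds_iff_ball.1 (hev.and hbd)
  have hO : (fun y => f y - (n ! : ℝ)⁻¹ • iteratedFDeriv ℝ n f 0 (fun _ => y))
      =O[𝓝 0] fun y => ‖y‖ ^ (n + 1) := by
    refine IsBigO.of_bound ((n ! : ℝ)⁻¹ * C) ?_
    filter_upwards [Metric.ball_mem_nhds (0 : ℂ) hr] with y hy
    have hty : ∀ t ∈ Set.Icc (0 : ℝ) 1, (0 : ℂ) + t • y ∈ Metric.ball (0 : ℂ) r := by
      intro t ht
      rw [mem_ball_zero_iff] at hy ⊢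
      rw [zero_add, norm_smul, Real.norm_of_nonneg ht.1]
      exact lt_of_le_of_lt (mul_le_of_le_one_left (norm_nonneg _) ht.2) hy
    have key := map_add_eq_sum_add_integral_iteratedFDeriv (f := f) (x := 0) (y := y) (n := n)
      (fun t ht => by exact_mod_cast (hball _ (hty t ht)).1)
    rw [Finset.sum_range_succ, Finset.sum_eq_zero (fun k hk => by
      rw [h0 k (Finset.mem_range.1 hk)]; simp), zero_add, zero_add] at key
    rw [key, add_sub_cancel_left, norm_smul, mul_assoc, norm_inv, Real.norm_natCast]
    gcongr
    have hint := intervalIntegral.norm_integral_le_of_norm_le_const (a := (0 : ℝ)) (b := 1)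
      (C := C * ‖y‖ ^ (n + 1))
      (f := fun t : ℝ => (1 - t) ^ n • iteratedFDeriv ℝ (n + 1) f (0 + t • y) (fun _ => y)) ?_
    · simpa using hint
    · intro t ht
      rw [Set.uIoc_of_le zero_le_one] at ht
      have hD := (hball _ (hty t ⟨ht.1.le, ht.2⟩)).2.le
      have hle := (iteratedFDeriv ℝ (n + 1) f (0 + t • y)).le_opNorm (fun _ => y)
      simp only [Finset.prod_const, Finset.card_univ, Fintype.card_fin] at hle
      rw [norm_smul, norm_pow, Real.norm_of_nonneg (by linarith [ht.2] : (0 : ℝ) ≤ 1 - t)]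
      have h1 : (1 - t) ^ n ≤ 1 := pow_le_one₀ (by linarith [ht.2]) (by linarith [ht.1])
      calc _ ≤ 1 * (C * ‖y‖ ^ (n + 1)) := by
            gcongr
            exact hle.trans (by gcongr)
        _ = _ := one_mul _
  refine hO.trans_isLittleO ?_
  have : Tendsto (fun y : ℂ => ‖y‖) (𝓝 0) (𝓝 0) := tendsto_norm_zero
  have h2 := (isLittleO_pow_pow (𝕜 := ℝ) (Nat.lt_succ_self n)).comp_tendsto this
  exact h2

lemma isLittleO_of_iteratedFDeriv_eq_zero {F : Type} [NormedAddCommGroup F] [NormedSpace ℝ F]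
    [CompleteSpace F] {f : ℂ → F} (hf : ContDiffAt ℝ ∞ f 0) {n : ℕ}
    (h0 : ∀ k ≤ n, iteratedFDeriv ℝ k f 0 = 0) :
    f =o[𝓝 0] fun y => ‖y‖ ^ n := by
  have := taylor_leading hf (n := n) (fun k hk => h0 k hk.le)
  simpa [h0 n le_rfl] using this

lemma isLittleO_norm_pow_of_le {F : Type*} [NormedAddCommGroup F] {f : ℂ → F} {m n : ℕ}
    (h : f =o[𝓝 0] fun y => ‖y‖ ^ n) (hmn : m ≤ n) : f =o[𝓝 0] fun y => ‖y‖ ^ m := by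
  refine h.trans_isBigO ?_
  refine IsBigO.of_bound 1 ?_
  filter_upwards [Metric.ball_mem_nhds (0 : ℂ) one_pos] with y hy
  rw [mem_ball_zero_iff] at hy
  simpa using pow_le_pow_of_le_one (norm_nonneg y) hy.le hmn

/-- A smooth function that is `o(‖y‖ⁿ)` has vanishing derivatives up to order `n`. Inductively,
`fderiv ℝ f = L + o(‖y‖ⁿ⁻¹)` with `L` homogeneous, and the rescalings `s⁻ⁿ f(s y)` tend to `0`
while their derivatives tend uniformly on balls to `L`; hence `L` is the derivative of `0`. -/
lemma iteratedFDeriv_eq_zero_of_isLittleO (n : ℕ) :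
    ∀ {F : Type} [NormedAddCommGroup F] [NormedSpace ℝ F]
    [CompleteSpace F] {f : ℂ → F} (_ : ContDiffAt ℝ ∞ f 0)
    (_ : f =o[𝓝 0] fun y => ‖y‖ ^ n), ∀ k ≤ n, iteratedFDeriv ℝ k f 0 = 0 := by
  induction n with
  | zero =>
    intro F _ _ _ f hf h k hk
    obtain rfl : k = 0 := by omega
    have h1 : Tendsto f (𝓝 0) (𝓝 0) := by
      simpa [isLittleO_one_iff] using h
    have h2 : f 0 = 0 := tendsto_nhds_unique hf.continuousAt h1
    ext m
    simp [h2]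
  | succ n ih =>
    intro F _ _ _ f hf h
    have hlow := ih hf (isLittleO_norm_pow_of_le h n.le_succ)
    have hf' : ContDiffAt ℝ ∞ (fderiv ℝ f) 0 := hf.fderiv_right (m := ∞) (by simp)
    have hnorm : ∀ k, iteratedFDeriv ℝ (k + 1) f 0 = 0 ↔ iteratedFDeriv ℝ k (fderiv ℝ f) 0 = 0 := by
      intro k
      rw [← norm_eq_zero, ← norm_iteratedFDeriv_fderiv, norm_eq_zero]
    set L : ℂ → (ℂ →L[ℝ] F) := fun y =>
      (n ! : ℝ)⁻¹ • iteratedFDeriv ℝ n (fderiv ℝ f) 0 (fun _ => y)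
    have hlead : (fun y => fderiv ℝ f y - L y) =o[𝓝 0] fun y => ‖y‖ ^ n :=
      taylor_leading hf' (n := n) (fun k hk => (hnorm k).1 (hlow _ hk))
    have hLhom : ∀ (s : ℝ) (x : ℂ), L (s • x) = s ^ n • L x := by
      intro s x
      have := (iteratedFDeriv ℝ n (fderiv ℝ f) 0).map_smul_univ (fun _ => s) (fun _ => x)
      simp only [Finset.prod_const, Finset.card_univ, Fintype.card_fin] at this
      change (n ! : ℝ)⁻¹ • _ = s ^ n • ((n ! : ℝ)⁻¹ • _)
      rw [this, smul_comm]
    have hdiff : ∀ᶠ y in 𝓝 (0 : ℂ), DifferentiableAt ℝ f y := by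
      have hf1 : ContDiffAt ℝ 1 f 0 := hf.of_le (by exact_mod_cast le_top)
      filter_upwards [hf1.eventually (by simp)] with y hy using hy.differentiableAt (by simp)
    obtain ⟨r, hr, hball⟩ := Metric.eventually_nhds_iff_ball.1 hdiff
    have hL0 : ∀ x, L x = 0 := by
      intro x
      set B := ‖x‖ + 1 with hB
      have hBpos : 0 < B := by positivity
      have hlim : HasFDerivAt (fun _ : ℂ => (0 : F)) (L x) x := by
        -- rescalings small enough that the rescaled ball stays in the domain of differentiability
        set σ : ℕ → ℝ := fun j => r / B * (1 / ((j : ℝ) + 1)) with hσ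
        have hσpos : ∀ j, 0 < σ j := fun j => by positivity
        have hσlim : Tendsto σ atTop (𝓝 0) := by
          have := (tendsto_one_div_add_atTop_nhds_zero_nat (𝕜 := ℝ)).const_mul (r / B)
          rwa [mul_zero] at this
        have hσle : ∀ j, σ j * B ≤ r := by
          intro j
          have h1 : 1 / ((j : ℝ) + 1) ≤ 1 := by
            rw [div_le_one (by positivity)]
            linarith [(Nat.cast_nonneg j : (0 : ℝ) ≤ j)]
          calc σ j * B = r * (1 / ((j : ℝ) + 1)) := by
                rw [hσ]; field_simp
            _ ≤ r := mul_le_of_le_one_right hr.le h1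
        clear_value σ
        refine hasFDerivAt_of_tendstoUniformlyOn (l := atTop)
          (s := Metric.ball (0 : ℂ) B)
          (f := fun j y => (σ j ^ (n + 1))⁻¹ • f (σ j • y))
          (f' := fun j y => (σ j ^ n)⁻¹ • fderiv ℝ f (σ j • y)) Metric.isOpen_ball ?_ ?_ ?_ ?_
        · rw [Metric.tendstoUniformlyOn_iff]
          intro ε hε
          have hc : 0 < ε / 2 / B ^ n := by positivity
          obtain ⟨δ, hδ, hδb⟩ := Metric.eventually_nhds_iff_ball.1 (hlead.bound hc)
          have hev : ∀ᶠ j in atTop, σ j < δ / B := hσlim.eventually_lt_const (by positivity)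
          filter_upwards [hev] with j hj y hy
          rw [mem_ball_zero_iff] at hy
          have hmem : σ j • y ∈ Metric.ball (0 : ℂ) δ := by
            rw [mem_ball_zero_iff, norm_smul, Real.norm_of_nonneg (hσpos j).le]
            calc σ j * ‖y‖ ≤ σ j * B := by have := hσpos j; gcongr
              _ < δ := (lt_div_iff₀ hBpos).1 hj
          have hb := hδb _ hmem
          rw [norm_pow, norm_norm, norm_smul, Real.norm_of_nonneg (hσpos j).le, hLhom] at hb
          have hp : 0 < σ j ^ n := pow_pos (hσpos j) n
          rw [dist_comm, dist_eq_norm]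
          have heq : (σ j ^ n)⁻¹ • fderiv ℝ f (σ j • y) - L y
              = (σ j ^ n)⁻¹ • (fderiv ℝ f (σ j • y) - σ j ^ n • L y) := by
            rw [smul_sub, inv_smul_smul₀ hp.ne']
          rw [heq, norm_smul, norm_inv, Real.norm_of_nonneg hp.le]
          calc (σ j ^ n)⁻¹ * ‖fderiv ℝ f (σ j • y) - σ j ^ n • L y‖
              ≤ (σ j ^ n)⁻¹ * (ε / 2 / B ^ n * (σ j * B) ^ n) := by
                have := hσpos j
                gcongr
                exact hb.trans (by gcongr)
            _ = ε / 2 := by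
                have := (hσpos j).ne'
                rw [mul_pow]
                field_simp
            _ < ε := by linarith
        · intro j y hy
          rw [mem_ball_zero_iff] at hy
          have hmem : σ j • y ∈ Metric.ball (0 : ℂ) r := by
            rw [mem_ball_zero_iff, norm_smul, Real.norm_of_nonneg (hσpos j).le]
            exact lt_of_lt_of_le (mul_lt_mul_of_pos_left hy (hσpos j)) (hσle j)
          have hd := (hball _ hmem).hasFDerivAt
          have hlin : HasFDerivAt (fun y : ℂ => σ j • y)
              (σ j • ContinuousLinearMap.id ℝ ℂ) y := (hasFDerivAt_id y).const_smul (σ j)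
          have hcomp := (hd.comp y hlin).const_smul ((σ j ^ (n + 1))⁻¹)
          refine hcomp.congr_fderiv ?_
          ext v
          change (σ j ^ (n + 1))⁻¹ • fderiv ℝ f (σ j • y) (σ j • v)
            = (σ j ^ n)⁻¹ • fderiv ℝ f (σ j • y) v
          rw [map_smul, smul_smul, pow_succ, mul_inv, mul_assoc, inv_mul_cancel₀ (hσpos j).ne',
            mul_one]
        · intro y _
          have ht : Tendsto (fun j => σ j • y) atTop (𝓝 0) := by
            simpa using hσlim.smul_const y
          have h1 := (h.comp_tendsto ht).trans_isBigO (k := fun j => σ j ^ (n + 1)) (by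
            refine IsBigO.of_bound (‖y‖ ^ (n + 1)) (Eventually.of_forall fun j => le_of_eq ?_)
            simp [mul_pow, mul_comm])
          simpa using h1.tendsto_inv_smul_nhds_zero
        · simp [hB]
      exact hlim.unique (hasFDerivAt_const 0 x)
    have hfo : fderiv ℝ f =o[𝓝 0] fun y => ‖y‖ ^ n := by
      simpa [hL0] using hlead
    intro k hk
    rcases k with _ | k
    · exact hlow 0 (by omega)
    · exact (hnorm k).2 (ih hf' hfo k (by omega))

/-! ### Leading terms along rays -/

lemma AnalyticAt.exists_eq_pow_mul_of_isLittleO {g : ℂ → ℂ} (hg : AnalyticAt ℂ g 0) {m : ℕ}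
    (ho : g =o[𝓝 0] fun t => ‖t‖ ^ m) :
    ∃ u : ℂ → ℂ, AnalyticAt ℂ u 0 ∧ ∀ᶠ t in 𝓝 0, g t = t ^ (m + 1) * u t := by
  have hle : ((m + 1 : ℕ) : ℕ∞) ≤ analyticOrderAt g 0 := by
    by_contra hlt
    rw [not_le] at hlt
    obtain ⟨j, hj⟩ := ENat.ne_top_iff_exists.1 (ne_top_of_lt hlt)
    rw [← hj] at hlt
    have hjm : j ≤ m := by
      have : j < m + 1 := by exact_mod_cast hlt
      omega
    obtain ⟨v, hv, hv0, hgv⟩ := (hg.analyticOrderAt_eq_natCast).1 hj.symm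
    have hoj := isLittleO_norm_pow_of_le ho hjm
    have hlim : Tendsto (fun t : ℂ => ((‖t‖ : ℝ) ^ j)⁻¹ • g t) (𝓝[≠] 0) (𝓝 0) :=
      (hoj.mono nhdsWithin_le_nhds).tendsto_inv_smul_nhds_zero
    have h2 : Tendsto (fun t => ‖v t‖) (𝓝[≠] 0) (𝓝 ‖v 0‖) :=
      (hv.continuousAt.norm.tendsto).mono_left nhdsWithin_le_nhds
    have h3 : (fun t => ‖((‖t‖ : ℝ) ^ j)⁻¹ • g t‖) =ᶠ[𝓝[≠] 0] fun t => ‖v t‖ := by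
      filter_upwards [hgv.filter_mono nhdsWithin_le_nhds, self_mem_nhdsWithin] with t ht htn
      have : ‖t‖ ≠ 0 := norm_ne_zero_iff.2 htn
      rw [ht, norm_smul]
      simp only [sub_zero, norm_smul, norm_pow, norm_inv, norm_norm]
      field_simp
    have h4 := tendsto_nhds_unique (h2.congr' h3.symm) hlim.norm
    simp [hv0] at h4
  obtain ⟨u, hu, h⟩ := (natCast_le_analyticOrderAt hg).1 hle
  exact ⟨u, hu, by simpa using h⟩

lemma eq_zero_of_re_mul_pow_eq_zero {c : ℂ} {r : ℕ} (hr : 0 < r)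
    (h : ∀ ζ : ℂ, (c * ζ ^ r).re = 0) : c = 0 := by
  obtain ⟨ζ, hζ⟩ := IsAlgClosed.exists_pow_nat_eq (starRingEnd ℂ c) hr
  have h1 := h ζ
  rw [hζ, Complex.mul_conj, Complex.ofReal_re] at h1
  exact Complex.normSq_eq_zero.1 h1

lemma tendsto_ray (ζ : ℂ) : Tendsto (fun s : ℝ => (s : ℂ) * ζ) (𝓝[>] 0) (𝓝 0) := by
  have : Continuous fun s : ℝ => (s : ℂ) * ζ := by fun_prop
  simpa using (this.tendsto 0).mono_left nhdsWithin_le_nhds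

lemma tendsto_ray_of_isLittleO {f : ℂ → ℝ} {m : ℕ} (hf : f =o[𝓝 0] fun t => ‖t‖ ^ m) (ζ : ℂ) :
    Tendsto (fun s : ℝ => (s ^ m)⁻¹ * f (s * ζ)) (𝓝[>] 0) (𝓝 0) := by
  have h1 := (hf.comp_tendsto (tendsto_ray ζ)).trans_isBigO (k := fun s : ℝ => s ^ m) (by
    refine IsBigO.of_bound (‖ζ‖ ^ m) (Eventually.of_forall fun j => le_of_eq ?_)
    simp [mul_pow, mul_comm])
  exact h1.tendsto_inv_smul_nhds_zero

lemma isBigO_of_eq_pow_mul {g u : ℂ → ℂ} {m : ℕ} (hu : AnalyticAt ℂ u 0)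
    (hg : ∀ᶠ t in 𝓝 0, g t = t ^ m * u t) : g =O[𝓝 0] fun t => ‖t‖ ^ m := by
  have h1 : (fun t : ℂ => t ^ m * u t) =O[𝓝 0] fun t => ‖t‖ ^ m * (1 : ℝ) := by
    refine IsBigO.mul (IsBigO.of_bound 1 (by simp)) ?_
    exact hu.continuousAt.isBigO_one ℝ
  simp only [mul_one] at h1
  exact h1.congr' (hg.mono fun t ht => ht.symm) EventuallyEq.rfl

lemma isLittleO_of_eq_pow_mul {g u : ℂ → ℂ} {m : ℕ} (hu : AnalyticAt ℂ u 0) (hu0 : u 0 = 0)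
    (hg : ∀ᶠ t in 𝓝 0, g t = t ^ m * u t) : g =o[𝓝 0] fun t => ‖t‖ ^ m := by
  have h1 : (fun t : ℂ => t ^ m * u t) =o[𝓝 0] fun t => ‖t‖ ^ m * (1 : ℝ) := by
    refine IsBigO.mul_isLittleO (IsBigO.of_bound 1 (by simp)) ?_
    rw [isLittleO_one_iff]
    simpa [hu0] using hu.continuousAt.tendsto
  simp only [mul_one] at h1
  exact h1.congr' (hg.mono fun t ht => ht.symm) EventuallyEq.rfl

/-- If `A = B + Re g + o(g)` with `A = o(‖t‖ᵐ)` and `g = tᵐ u`, then the degree `m` part of `B`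
along every ray is the negative of that of `Re g`. -/
lemma tendsto_ray_remainder {A B : ℂ → ℝ} {g u : ℂ → ℂ} {m : ℕ}
    (hA : A =o[𝓝 0] fun t => ‖t‖ ^ m)
    (hABg : (fun t => A t - B t - (g t).re) =o[𝓝 0] g)
    (hu : AnalyticAt ℂ u 0) (hg : ∀ᶠ t in 𝓝 0, g t = t ^ m * u t) (ζ : ℂ) :
    Tendsto (fun s : ℝ => (s ^ m)⁻¹ * B (s * ζ)) (𝓝[>] 0) (𝓝 (-(u 0 * ζ ^ m).re)) := by
  have h1 := tendsto_ray_of_isLittleO (hABg.trans_isBigO (isBigO_of_eq_pow_mul hu hg)) ζ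
  have h2 := tendsto_ray_of_isLittleO hA ζ
  have h3 : Tendsto (fun s : ℝ => (s ^ m)⁻¹ * (g (s * ζ)).re) (𝓝[>] 0)
      (𝓝 ((u 0 * ζ ^ m).re)) := by
    have h4 : Tendsto (fun s : ℝ => (u (s * ζ) * ζ ^ m).re) (𝓝[>] 0) (𝓝 ((u 0 * ζ ^ m).re)) :=
      (Complex.continuous_re.tendsto _).comp
        ((hu.continuousAt.tendsto.comp (tendsto_ray ζ)).mul_const _)
    refine h4.congr' ?_
    filter_upwards [(tendsto_ray ζ).eventually hg, self_mem_nhdsWithin] with s hs hs0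
    have hs0 : s ≠ 0 := ne_of_gt hs0
    rw [hs, mul_pow, mul_assoc, ← Complex.ofReal_pow, Complex.re_ofReal_mul,
      inv_mul_cancel_left₀ (pow_ne_zero _ hs0), mul_comm]
  have h5 := (h2.sub h1).sub h3
  simp only [sub_zero, zero_sub] at h5
  refine h5.congr fun s => ?_
  ring

/-- `ρ(u, w) = ρ(v, w) + Re (u - v) + o(u - v)`: the term `y Q(w, y)` has strict derivative `0` at
the origin. -/
lemma isLittleO_rho_sub {Q : ℂ × ℝ → ℝ} (P : ℂ → ℝ) (hQsm : ContDiff ℝ (⊤ : ℕ∞) Q)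
    (hQ0 : Q (0, 0) = 0) {u v w : ℂ → ℂ} (hu : Tendsto u (𝓝 0) (𝓝 0))
    (hv : Tendsto v (𝓝 0) (𝓝 0)) (hw : Tendsto w (𝓝 0) (𝓝 0)) :
    (fun t => ((u t).re + P (w t) + (u t).im * Q (w t, (u t).im))
      - ((v t).re + P (w t) + (v t).im * Q (w t, (v t).im)) - (u t - v t).re)
      =o[𝓝 0] fun t => u t - v t := by
  have hQ1 : HasStrictFDerivAt Q (fderiv ℝ Q (0, 0)) (0, 0) :=
    (hQsm.contDiffAt).hasStrictFDerivAt (by simp)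
  have hG : HasStrictFDerivAt (fun x : ℂ × ℝ => x.2 * Q x) (0 : ℂ × ℝ →L[ℝ] ℝ) (0, 0) := by
    have h := (hasStrictFDerivAt_snd (𝕜 := ℝ) (E := ℂ) (F := ℝ) (p := (0, 0))).mul hQ1
    simp only [hQ0, zero_smul, add_zero] at h
    exact h
  have him : Tendsto (fun z : ℂ => z.im) (𝓝 0) (𝓝 0) := Complex.continuous_im.tendsto 0
  have ht : Tendsto (fun t => ((w t, (u t).im), (w t, (v t).im))) (𝓝 0)
      (𝓝 (((0 : ℂ), (0 : ℝ)), ((0 : ℂ), (0 : ℝ)))) :=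
    (hw.prodMk_nhds (him.comp hu)).prodMk_nhds (hw.prodMk_nhds (him.comp hv))
  have h1 := hG.isLittleO.comp_tendsto ht
  have h2 := h1.trans_isBigO (k := fun t => u t - v t) (by
    refine IsBigO.of_bound 1 (Eventually.of_forall fun t => ?_)
    simpa using Complex.abs_im_le_norm (u t - v t))
  refine h2.congr_left fun t => ?_
  simp
  ring

/-! ### Raising the order of contact -/

/-- A curve `(p(t), t)` along which `ρ` is `o(‖t‖ⁿ)` can be corrected by a monomial of degree
`n + 1` so that `ρ` becomes `o(‖t‖ⁿ⁺¹)`. -/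
lemma exists_improvement (P : ℂ → ℝ) (Q : ℂ × ℝ → ℝ)
    (hPsm : ContDiff ℝ (⊤ : ℕ∞) P) (hQsm : ContDiff ℝ (⊤ : ℕ∞) Q)
    (hP0 : P 0 = 0) (hQ0 : Q (0, 0) = 0)
    (htype : IsInfiniteType (fun z : ℂ × ℂ => z.1.re + P z.2 + z.1.im * Q (z.2, z.1.im)))
    {n : ℕ} (hn : 1 ≤ n) {p : ℂ → ℂ} (hp : Differentiable ℂ p) (hpo : p =o[𝓝 0] fun t : ℂ => t)
    (hρp : (fun t : ℂ => (p t).re + P t + (p t).im * Q (t, (p t).im)) =o[𝓝 0] fun t => ‖t‖ ^ n) :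
    ∃ c : ℂ, (fun t : ℂ => (p t - c * t ^ (n + 1)).re + P t
      + (p t - c * t ^ (n + 1)).im * Q (t, (p t - c * t ^ (n + 1)).im))
        =o[𝓝 0] fun t => ‖t‖ ^ (n + 1) := by
  have hp0 : p 0 = 0 := by
    have := hpo.tendsto_zero_of_tendsto tendsto_id
    exact tendsto_nhds_unique hp.continuous.continuousAt this
  set ρ : ℂ × ℂ → ℝ := fun z => z.1.re + P z.2 + z.1.im * Q (z.2, z.1.im) with hρ
  have hρsm : ContDiff ℝ ∞ ρ := by
    have hre : ContDiff ℝ ∞ (fun z : ℂ × ℂ => z.1.re) :=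
      Complex.reCLM.contDiff.comp contDiff_fst
    have him : ContDiff ℝ ∞ (fun z : ℂ × ℂ => z.1.im) :=
      Complex.imCLM.contDiff.comp contDiff_fst
    exact (hre.add (hPsm.comp contDiff_snd)).add
      (him.mul (hQsm.comp (contDiff_snd.prodMk him)))
  have hρ0 : ρ (0, 0) = 0 := by simp [hρ, hP0]
  -- the leading part `R` of `F = ρ ∘ (p, id)`
  set F : ℂ → ℝ := fun t => ρ (p t, t) with hF
  have hFsm : ContDiffAt ℝ ∞ F 0 := by
    have hp' : ContDiff ℝ ∞ p := (hp.contDiff (n := ∞)).restrict_scalars ℝ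
    exact (hρsm.comp (hp'.prodMk contDiff_id)).contDiffAt
  have hFn : F =o[𝓝 0] fun t => ‖t‖ ^ n := hρp
  have hFder := iteratedFDeriv_eq_zero_of_isLittleO n hFsm hFn
  have hFR := taylor_leading hFsm (n := n + 1) (fun k hk => hFder k (by omega))
  set M := iteratedFDeriv ℝ (n + 1) F 0 with hM
  obtain ⟨R, hRdef⟩ : ∃ R : ℂ → ℝ, R = fun y => ((n + 1)! : ℝ)⁻¹ • M (fun _ => y) := ⟨_, rfl⟩
  have hFR : (fun t => F t - R t) =o[𝓝 0] fun t => ‖t‖ ^ (n + 1) := by rw [hRdef]; exact hFR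
  have hRcont : Continuous R := by
    rw [hRdef]
    have hMc : Continuous fun y : ℂ => M (fun _ => y) :=
      M.cont.comp (continuous_pi fun _ => continuous_id)
    simp only [smul_eq_mul]
    exact continuous_const.mul hMc
  have hRhom : ∀ (s : ℝ) (y : ℂ), R (s * y) = s ^ (n + 1) * R y := by
    intro s y
    have := M.map_smul_univ (fun _ => s) (fun _ => y)
    simp only [Finset.prod_const, Finset.card_univ, Fintype.card_fin, smul_eq_mul,
      Complex.real_smul] at this
    rw [hRdef]
    simp only [smul_eq_mul, this]
    ring
  have hRO : R =O[𝓝 0] fun t => ‖t‖ ^ (n + 1) := by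
    refine IsBigO.of_bound (((n + 1)! : ℝ)⁻¹ * ‖M‖) (Eventually.of_forall fun t => ?_)
    have hle := M.le_opNorm (fun _ => t)
    simp only [Finset.prod_const, Finset.card_univ, Fintype.card_fin] at hle
    rw [hRdef, norm_smul, norm_inv, Real.norm_natCast, norm_pow, norm_norm, mul_assoc]
    gcongr
  have hFO : F =O[𝓝 0] fun t => ‖t‖ ^ (n + 1) := by
    simpa using hFR.isBigO.add hRO
  -- a disc of high contact
  obtain ⟨h, hhd, hh0, hhtop, hcontact⟩ := htype (n + 1) n.succ_pos
  obtain ⟨k, hk, hDk⟩ := exists_vanishOrder_eq hhtop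
  have hlow : ∀ j < k, iteratedFDeriv ℝ j h 0 = 0 :=
    natCast_le_vanishOrder_iff.1 hk.ge
  have hkpos : 0 < k := by
    rcases Nat.eq_zero_or_pos k with rfl | hpos
    · exact absurd (by ext m <;> simp [hh0]) hDk
    · exact hpos
  have hhan : AnalyticAt ℂ h 0 := hhd.analyticAt (Metric.ball_mem_nhds _ one_pos)
  have hhsm : ContDiffAt ℝ ∞ h 0 := (hhan.contDiffAt (n := ∞)).restrict_scalars ℝ
  have hh1 : AnalyticAt ℂ (fun t => (h t).1) 0 :=
    (ContinuousLinearMap.fst ℂ ℂ ℂ).analyticAt _ |>.comp hhan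
  have hh2 : AnalyticAt ℂ (fun t => (h t).2) 0 :=
    (ContinuousLinearMap.snd ℂ ℂ ℂ).analyticAt _ |>.comp hhan
  have ht1 : Tendsto (fun t => (h t).1) (𝓝 0) (𝓝 0) := by
    simpa [hh0] using hh1.continuousAt.tendsto
  have ht2 : Tendsto (fun t => (h t).2) (𝓝 0) (𝓝 0) := by
    simpa [hh0] using hh2.continuousAt.tendsto
  have htp2 : Tendsto (fun t => p (h t).2) (𝓝 0) (𝓝 0) := by
    have := (hp.continuous.tendsto 0).comp ht2
    rwa [hp0] at this
  have hho : h =o[𝓝 0] fun t => ‖t‖ ^ (k - 1) :=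
    isLittleO_of_iteratedFDeriv_eq_zero hhsm (fun j hj => hlow j (by omega))
  obtain ⟨u₁, hu₁, hhu₁⟩ := hh1.exists_eq_pow_mul_of_isLittleO
    ((IsBigO.of_bound 1 (Eventually.of_forall fun t => by
      simpa using norm_fst_le (h t))).trans_isLittleO hho)
  obtain ⟨u₂, hu₂, hhu₂⟩ := hh2.exists_eq_pow_mul_of_isLittleO
    ((IsBigO.of_bound 1 (Eventually.of_forall fun t => by
      simpa using norm_snd_le (h t))).trans_isLittleO hho)
  rw [Nat.sub_add_cancel hkpos] at hhu₁ hhu₂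
  have hnz : ¬ (u₁ 0 = 0 ∧ u₂ 0 = 0) := by
    rintro ⟨h10, h20⟩
    have := (isLittleO_of_eq_pow_mul hu₁ h10 hhu₁).prod_left (isLittleO_of_eq_pow_mul hu₂ h20 hhu₂)
    exact hDk (iteratedFDeriv_eq_zero_of_isLittleO k hhsm this k le_rfl)
  -- `ρ ∘ h` vanishes to order larger than `(n + 1) * k`
  set A : ℂ → ℝ := fun t => ρ (h t) with hA
  have hAsm : ContDiffAt ℝ ∞ A 0 := hρsm.contDiffAt.comp 0 hhsm
  have hAo : A =o[𝓝 0] fun t => ‖t‖ ^ ((n + 1) * k) := by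
    rw [hk] at hcontact
    have hc : (((n + 1) * k + 1 : ℕ) : ℕ∞) ≤ vanishOrder A := by
      rw [Nat.cast_add, Nat.cast_one]
      refine Order.add_one_le_of_lt ?_
      exact_mod_cast hcontact
    exact isLittleO_of_iteratedFDeriv_eq_zero hAsm fun j hj =>
      natCast_le_vanishOrder_iff.1 hc j (by omega)
  set g : ℂ → ℂ := fun t => (h t).1 - p (h t).2 with hg
  have hgan : AnalyticAt ℂ g 0 := by
    exact hh1.sub
      (AnalyticAt.comp (g := p) (f := fun t => (h t).2) (hp.analyticAt _) hh2)
  set B : ℂ → ℝ := fun t => F (h t).2 with hB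
  have hABg : (fun t => A t - B t - (g t).re) =o[𝓝 0] g :=
    isLittleO_rho_sub P hQsm hQ0 ht1 htp2 ht2
  have hBO : B =O[𝓝 0] fun t => ‖t‖ ^ ((n + 1) * k) := by
    refine (hFO.comp_tendsto ht2).trans ?_
    have := ((isBigO_of_eq_pow_mul hu₂ hhu₂).norm_left).pow (n + 1)
    simpa [Function.comp_def, ← pow_mul, mul_comm] using this
  have hb : u₂ 0 ≠ 0 := by
    intro hb
    have hh2o := isLittleO_of_eq_pow_mul hu₂ hb hhu₂
    have hpo2 : (fun t => p (h t).2) =o[𝓝 0] fun t => ‖t‖ ^ k :=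
      (hpo.comp_tendsto ht2).trans hh2o
    obtain ⟨u₃, hu₃, hpu₃⟩ := AnalyticAt.exists_eq_pow_mul_of_isLittleO
      (AnalyticAt.comp (g := p) (f := fun t => (h t).2) (hp.analyticAt _) hh2) hpo2
    have hgu : ∀ᶠ t in 𝓝 0, g t = t ^ k * (u₁ t - t * u₃ t) := by
      filter_upwards [hhu₁, hpu₃] with t h1 h3
      simp only [Function.comp] at h3
      rw [hg]
      simp only [h1, h3]
      ring
    have hBo : B =o[𝓝 0] fun t => ‖t‖ ^ k := by
      have h1 := isLittleO_norm_pow_of_le hFn hn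
      have h2 := (h1.comp_tendsto ht2)
      refine h2.trans_isBigO ?_
      simpa [Function.comp_def] using hh2o.isBigO
    have hu10 : u₁ 0 = 0 := by
      refine eq_zero_of_re_mul_pow_eq_zero hkpos fun ζ => ?_
      have h1 := tendsto_ray_remainder (isLittleO_norm_pow_of_le hAo (by nlinarith)) hABg
        (hu₁.sub (analyticAt_id.mul hu₃)) hgu ζ
      have h2 := tendsto_nhds_unique h1 (tendsto_ray_of_isLittleO hBo ζ)
      simpa only [neg_eq_zero, Pi.sub_apply, Pi.mul_apply, id, zero_mul, sub_zero] using h2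
    exact hnz ⟨hu10, hb⟩
  -- `ρ ∘ h` and `B` are both `O(‖t‖ ^ ((n + 1) * k))`, so no lower-order term of `g` survives
  have hgo : ∀ m < (n + 1) * k, g =o[𝓝 0] fun t => ‖t‖ ^ m := by
    intro m
    induction m with
    | zero =>
      intro _
      have : Tendsto g (𝓝 0) (𝓝 0) := by simpa using ht1.sub htp2
      simpa [isLittleO_one_iff] using this
    | succ m ih =>
      intro hm
      obtain ⟨u, hu, hgu⟩ := hgan.exists_eq_pow_mul_of_isLittleO (ih (by omega))
      refine isLittleO_of_eq_pow_mul hu ?_ hgu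
      refine eq_zero_of_re_mul_pow_eq_zero m.succ_pos fun ζ => ?_
      have h1 := tendsto_ray_remainder (isLittleO_norm_pow_of_le hAo hm.le) hABg hu hgu ζ
      have hBo : B =o[𝓝 0] fun t => ‖t‖ ^ (m + 1) :=
        hBO.trans_isLittleO
          ((isLittleO_pow_pow (𝕜 := ℝ) hm).comp_tendsto (tendsto_norm_zero (E := ℂ)))
      have h2 := tendsto_nhds_unique h1 (tendsto_ray_of_isLittleO hBo ζ)
      rwa [neg_eq_zero] at h2
  have hNk : 0 < (n + 1) * k := by positivity
  obtain ⟨u, hu, hgu⟩ := hgan.exists_eq_pow_mul_of_isLittleO (hgo ((n + 1) * k - 1) (by omega))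
  rw [Nat.sub_add_cancel hNk] at hgu
  have hRray : ∀ ζ : ℂ, R (u₂ 0 * ζ ^ k) = -(u 0 * ζ ^ ((n + 1) * k)).re := by
    intro ζ
    have h1 := tendsto_ray_remainder hAo hABg hu hgu ζ
    have h2 : (fun t => B t - R (h t).2) =o[𝓝 0] fun t => ‖t‖ ^ ((n + 1) * k) := by
      refine (hFR.comp_tendsto ht2).trans_isBigO ?_
      have := ((isBigO_of_eq_pow_mul hu₂ hhu₂).norm_left).pow (n + 1)
      simpa [Function.comp_def, ← pow_mul, mul_comm] using this
    have h3 : Tendsto (fun s : ℝ => (s ^ ((n + 1) * k))⁻¹ * R (h (s * ζ)).2) (𝓝[>] 0)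
        (𝓝 (R (u₂ 0 * ζ ^ k))) := by
      have h4 : Tendsto (fun s : ℝ => R (u₂ (s * ζ) * ζ ^ k)) (𝓝[>] 0)
          (𝓝 (R (u₂ 0 * ζ ^ k))) :=
        (hRcont.tendsto _).comp ((hu₂.continuousAt.tendsto.comp (tendsto_ray ζ)).mul_const _)
      refine h4.congr' ?_
      filter_upwards [(tendsto_ray ζ).eventually hhu₂, self_mem_nhdsWithin] with s hs hs0
      have hs0 : s ≠ 0 := ne_of_gt hs0
      rw [hs, mul_pow, mul_assoc, ← Complex.ofReal_pow, hRhom, ← pow_mul, mul_comm k,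
        inv_mul_cancel_left₀ (pow_ne_zero _ hs0), mul_comm]
    have h5 := h1.sub (tendsto_ray_of_isLittleO h2 ζ)
    rw [sub_zero] at h5
    refine tendsto_nhds_unique h3 (h5.congr fun s => ?_)
    ring
  have hR : ∀ x : ℂ, R x = (-(u 0 / u₂ 0 ^ (n + 1)) * x ^ (n + 1)).re := by
    intro x
    obtain ⟨ζ, hζ⟩ := IsAlgClosed.exists_pow_nat_eq (x / u₂ 0) hkpos
    have h1 := hRray ζ
    rw [mul_comm (n + 1), pow_mul, hζ, mul_div_cancel₀ _ hb] at h1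
    rw [h1, ← Complex.neg_re]
    congr 1
    rw [div_pow]
    ring
  refine ⟨-(u 0 / u₂ 0 ^ (n + 1)), ?_⟩
  set c := -(u 0 / u₂ 0 ^ (n + 1))
  have htp : Tendsto p (𝓝 0) (𝓝 0) := by
    simpa [hp0] using hp.continuous.tendsto 0
  have htc : Tendsto (fun t : ℂ => p t - c * t ^ (n + 1)) (𝓝 0) (𝓝 0) := by
    have : Continuous fun t : ℂ => p t - c * t ^ (n + 1) := by
      have := hp.continuous
      fun_prop
    simpa [hp0] using this.tendsto 0
  have h1 := (isLittleO_rho_sub P hQsm hQ0 htc htp tendsto_id).trans_isBigO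
    (k := fun t : ℂ => ‖t‖ ^ (n + 1)) (by
      refine IsBigO.of_bound ‖c‖ (Eventually.of_forall fun t => ?_)
      simp)
  refine (h1.add hFR).congr_left fun t => ?_
  rw [hR t]
  simp only [hF, hρ, id]
  simp only [Complex.sub_re]
  ring

/-- **Proposition (Kim–Ninh).** Let M be a C^∞ hypersurface germ at 0 in ℂ² with defining
function ρ(z₁,z₂) = Re z₁ + P(z₂) + (Im z₁) Q(z₂, Im z₁), with P(0)=0, dP(0)=0, Q(0,0)=0.
If τ(M,0) = +∞, then there is a sequence {aₙ} ⊆ ℂ such that for each N ≥ 2 the holomorphic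
curve φ_N(t) = (−Σ_{j=2}^N a_j t^j, t) satisfies ν(ρ ∘ φ_N) ≥ N. -/
theorem statement3 (P : ℂ → ℝ) (Q : ℂ × ℝ → ℝ)
    (hPsm : ContDiff ℝ (⊤ : ℕ∞) P) (hQsm : ContDiff ℝ (⊤ : ℕ∞) Q)
    (hP0 : P 0 = 0) (hdP0 : fderiv ℝ P 0 = 0) (hQ0 : Q (0, 0) = 0)
    (htype : IsInfiniteType (fun z : ℂ × ℂ => z.1.re + P z.2 + z.1.im * Q (z.2, z.1.im))) :
    ∃ a : ℕ → ℂ, ∀ N : ℕ, 2 ≤ N →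
      (N : ℕ∞) ≤ vanishOrder (fun t : ℂ =>
        (fun z : ℂ × ℂ => z.1.re + P z.2 + z.1.im * Q (z.2, z.1.im))
          (-(∑ j ∈ Finset.Icc 2 N, a j * t ^ j), t)) := by
  -- `Good n p`: the curve `(p, id)` is tangent to the second axis and meets `M` to order `> n`
  let Good : ℕ → (ℂ → ℂ) → Prop := fun n p =>
    Differentiable ℂ p ∧ (p =o[𝓝 0] fun t : ℂ => t) ∧
    (fun t : ℂ => (p t).re + P t + (p t).im * Q (t, (p t).im)) =o[𝓝 0] fun t => ‖t‖ ^ n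
  have hstep : ∀ (m : ℕ) (p : ℂ → ℂ), ∃ c : ℂ,
      Good (m + 1) p → Good (m + 2) (fun t => p t - c * t ^ (m + 2)) := by
    intro m p
    by_cases hG : Good (m + 1) p
    · obtain ⟨hp, hpo, hρp⟩ := hG
      obtain ⟨c, hc⟩ := exists_improvement P Q hPsm hQsm hP0 hQ0 htype (by omega) hp hpo hρp
      refine ⟨c, fun _ => ⟨by fun_prop, ?_, hc⟩⟩
      refine hpo.sub ?_
      have : (fun t : ℂ => t ^ (m + 2)) =o[𝓝 0] fun t : ℂ => t ^ 1 :=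
        isLittleO_pow_pow (by omega)
      simpa using this.const_mul_left c
    · exact ⟨0, fun h => absurd h hG⟩
  choose C hC using hstep
  -- `p m` is the first component of the curve truncated at degree `m + 1`
  let p : ℕ → ℂ → ℂ := fun m => Nat.rec (fun _ => 0) (fun m q t => q t - C m q * t ^ (m + 2)) m
  have hgood : ∀ m, Good (m + 1) (p m) := by
    intro m
    induction m with
    | zero =>
      refine ⟨differentiable_const 0, isLittleO_zero _ _, ?_⟩
      have hd : HasFDerivAt P (0 : ℂ →L[ℝ] ℝ) 0 := by
        rw [← hdP0]
        exact (hPsm.differentiable (by simp) 0).hasFDerivAt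
      have h1 := hd.isLittleO
      simp only [hP0, sub_zero, _root_.zero_apply] at h1
      simpa [p] using h1.norm_right
    | succ m ih => exact hC m (p m) ih
  refine ⟨fun j => C (j - 2) (p (j - 2)), fun N hN => ?_⟩
  set a : ℕ → ℂ := fun j => C (j - 2) (p (j - 2)) with ha
  have hsum : ∀ m t, p m t = -(∑ j ∈ Finset.Icc 2 (m + 1), a j * t ^ j) := by
    intro m t
    induction m with
    | zero => simp [p]
    | succ m ih =>
      rw [Finset.sum_Icc_succ_top (by omega), neg_add, ← ih]
      change p m t - C m (p m) * t ^ (m + 2) = _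
      simp [ha, sub_eq_add_neg]
  obtain ⟨m, rfl⟩ : ∃ m, N = m + 1 := ⟨N - 1, by omega⟩
  obtain ⟨hpd, -, hpρ⟩ := hgood m
  have hp' : ContDiff ℝ ∞ (p m) := (hpd.contDiff (n := ∞)).restrict_scalars ℝ
  have hre : ContDiff ℝ ∞ (fun t => (p m t).re) := Complex.reCLM.contDiff.comp hp'
  have him : ContDiff ℝ ∞ (fun t => (p m t).im) := Complex.imCLM.contDiff.comp hp'
  have hsm : ContDiff ℝ ∞ (fun t : ℂ => (p m t).re + P t + (p m t).im * Q (t, (p m t).im)) :=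
    (hre.add hPsm).add (him.mul (hQsm.comp (contDiff_id.prodMk him)))
  rw [natCast_le_vanishOrder_iff]
  intro k hk
  simp only [← hsum]
  exact iteratedFDeriv_eq_zero_of_isLittleO (m + 1) hsm.contDiffAt hpρ k hk.le
end

section
/- Let P be a C^∞-smooth real-valued function on a disc {|z| < ε} in ℂ with P(0)=0, P(z) > 0 for all z ≠ 0, and P vanishing to infinite order at 0. Let b be a complex number and k a nonnegative integer, and assume it is not the case that k = 1 and Re b = 0. If Re[b z^k P'(z)] = 0 for all z with |z| < ε, then b = 0. -/
/-!
Since `P` is real-valued, `2 Re (v ∂P/∂z)` is the derivative of `P` at `z` in the direction `v`.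
The hypothesis therefore says that `P` is constant along the integral curves of the vector field
`b z ^ k`, whatever their real reparametrization. If `b ≠ 0`, some integral curve tends to `0`,
so `P` takes the value `P 0 = 0` on it, against positivity off `0`.

Up to reparametrization the curve is always `s ↦ z₀ exp (a s)` with `Re a < 0`
(`false_of_tangent_curve`): for `k = 1` it is a logarithmic spiral with `a = -b / Re b`; for
`k ≠ 1` it is a ray `a = -1` in a direction `u` for which `b u ^ k` is a positive real multiple
of `u` (`exists_invariant_direction`).
-/

open Complex Metric Filter Topology Asymptotics

theorem re_mul_wirtingerR {P : ℂ → ℝ} {z : ℂ} (h : DifferentiableAt ℝ P z) (v : ℂ) :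
    (v * wirtingerR P z).re = fderiv ℝ P z v / 2 := by
  have h1 : HasFDerivAt (fun w => (P w : ℂ)) (Complex.ofRealCLM.comp (fderiv ℝ P z)) z :=
    Complex.ofRealCLM.hasFDerivAt.comp z h.hasFDerivAt
  have hv : v = v.re • (1 : ℂ) + v.im • Complex.I := by
    simp [Complex.re_add_im]
  have h2 : fderiv ℝ P z v = v.re * fderiv ℝ P z 1 + v.im * fderiv ℝ P z Complex.I := by
    conv_lhs => rw [hv]
    rw [map_add, map_smul, map_smul, smul_eq_mul, smul_eq_mul]
  rw [h2]
  simp only [wirtingerR, wirtinger, h1.fderiv, ContinuousLinearMap.comp_apply,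
    Complex.ofRealCLM_apply]
  simp
  ring

/-- The curve `s ↦ z₀ exp (a s)` spirals into `0` because `Re a < 0`. If it is everywhere tangent
to the vector field `b z ^ k`, then `P` is constant along it, hence equal to `P 0 = 0`. -/
theorem false_of_tangent_curve {ε : ℝ} (hε : 0 < ε) {P : ℂ → ℝ}
    (hP : ∀ z ∈ Metric.ball (0 : ℂ) ε, DifferentiableAt ℝ P z)
    (hP0 : P 0 = 0)
    (hPpos : ∀ z ∈ Metric.ball (0 : ℂ) ε, z ≠ 0 → 0 < P z)
    {b : ℂ} {k : ℕ}
    (heq : ∀ z ∈ Metric.ball (0 : ℂ) ε, (b * z ^ k * wirtingerR P z).re = 0)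
    {z₀ a : ℂ} (hz₀ : z₀ ∈ Metric.ball (0 : ℂ) ε) (hz₀' : z₀ ≠ 0) (ha : a.re < 0)
    (htan : ∀ s : ℝ, ∃ c : ℝ,
      a * (z₀ * Complex.exp (a * s)) = c * (b * (z₀ * Complex.exp (a * s)) ^ k)) :
    False := by
  set γ : ℝ → ℂ := fun s => z₀ * Complex.exp (a * s) with hγ
  have hnorm : ∀ s, ‖γ s‖ = ‖z₀‖ * Real.exp (a.re * s) := by
    intro s
    simp [hγ, Complex.norm_exp]
  have hball : ∀ s, 0 ≤ s → γ s ∈ Metric.ball (0 : ℂ) ε := by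
    intro s hs
    rw [mem_ball_zero_iff] at hz₀ ⊢
    rw [hnorm]
    have : Real.exp (a.re * s) ≤ 1 := Real.exp_le_one_iff.2 (by nlinarith)
    nlinarith [norm_nonneg z₀]
  have hγd : ∀ s, HasDerivAt γ (a * γ s) s := by
    intro s
    have h1 : HasDerivAt (fun t : ℝ => a * (t : ℂ)) a s := by
      simpa using (Complex.ofRealCLM.hasDerivAt (x := s)).const_mul a
    have h2 := (h1.cexp).const_mul z₀
    have h3 : a * γ s = z₀ * (Complex.exp (a * s) * a) := by
      simp only [hγ]
      ring
    rw [h3]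
    exact h2
  have hderiv : ∀ s, 0 ≤ s → HasDerivAt (fun t => P (γ t)) 0 s := by
    intro s hs
    have h1 := (hP _ (hball s hs)).hasFDerivAt.comp_hasDerivAt s (hγd s)
    obtain ⟨c, hc⟩ := htan s
    have h2 : fderiv ℝ P (γ s) (a * γ s) = 0 := by
      have h3 := heq _ (hball s hs)
      rw [re_mul_wirtingerR (hP _ (hball s hs))] at h3
      have h4 : a * γ s = c • (b * γ s ^ k) := by
        rw [Complex.real_smul]
        exact hc
      rw [h4, map_smul, smul_eq_mul]
      linear_combination 2 * c * h3
    rw [h2] at h1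
    exact h1
  have hconst : ∀ T, 0 ≤ T → P (γ T) = P (γ 0) := by
    intro T hT
    exact constant_of_has_deriv_right_zero (f := fun t => P (γ t))
      (fun s hs => (hderiv s hs.1).continuousAt.continuousWithinAt)
      (fun s hs => (hderiv s hs.1).hasDerivWithinAt) T ⟨hT, le_rfl⟩
  have hγ0 : γ 0 = z₀ := by simp [hγ]
  have hlim : Tendsto γ atTop (𝓝 0) := by
    rw [tendsto_zero_iff_norm_tendsto_zero]
    simp_rw [hnorm]
    have h1 : Tendsto (fun s : ℝ => a.re * s) atTop atBot :=
      tendsto_id.const_mul_atTop_of_neg ha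
    simpa using (Real.tendsto_exp_atBot.comp h1).const_mul ‖z₀‖
  have hPlim : Tendsto (fun s => P (γ s)) atTop (𝓝 (P 0)) :=
    (hP 0 (Metric.mem_ball_self hε)).continuousAt.tendsto.comp hlim
  have hPlim' : Tendsto (fun s => P (γ s)) atTop (𝓝 (P z₀)) := by
    refine tendsto_const_nhds.congr' ?_
    filter_upwards [eventually_ge_atTop 0] with s hs
    rw [hconst s hs, hγ0]
  have := tendsto_nhds_unique hPlim hPlim'
  have := hPpos z₀ hz₀ hz₀'
  linarith

theorem exists_invariant_direction {b : ℂ} (hb : b ≠ 0) {k : ℕ} (hk : k ≠ 1) :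
    ∃ u : ℂ, ‖u‖ = 1 ∧ b * u ^ k = ‖b‖ * u := by
  have hb' : (‖b‖ : ℂ) ≠ 0 := by simpa using hb
  match k, hk with
  | 0, _ =>
    refine ⟨b / ‖b‖, by simp [hb], ?_⟩
    field_simp
  | m + 2, _ =>
    -- `u` is an `(m + 1)`-st root of the unimodular number `|b| / b`.
    obtain ⟨u, hu⟩ := IsAlgClosed.exists_pow_nat_eq ((‖b‖ : ℂ) / b) (Nat.succ_pos m)
    refine ⟨u, ?_, ?_⟩
    · have h := congrArg norm hu
      rw [norm_pow, norm_div, Complex.norm_real, norm_norm, div_self (by simpa using hb)] at h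
      exact (pow_eq_one_iff_of_nonneg (norm_nonneg u) (Nat.succ_ne_zero m)).1 h
    · have h : b * u ^ (m + 1) = ‖b‖ := by
        rw [hu]
        field_simp
      rw [pow_succ, ← mul_assoc, h]

/-- **Lemma 6 (Kim–Ninh).** Let P be C^∞ on {|z| < ε} with P(0)=0, P > 0 off 0, vanishing
to infinite order at 0. Let b ∈ ℂ and k a nonnegative integer, excluding the case k = 1 and
Re b = 0. If Re[b z^k P'(z)] = 0 for all |z| < ε, then b = 0. -/
theorem statement11 (ε : ℝ) (hε : 0 < ε) (P : ℂ → ℝ)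
    (hPsm : ContDiffOn ℝ (⊤ : ℕ∞) P (Metric.ball 0 ε))
    (hP0 : P 0 = 0)
    (hPpos : ∀ z ∈ Metric.ball (0 : ℂ) ε, z ≠ 0 → 0 < P z)
    (hPflat : ∀ n : ℕ, iteratedFDeriv ℝ n P 0 = 0)
    (b : ℂ) (k : ℕ) (hexc : ¬ (k = 1 ∧ b.re = 0))
    (heq : ∀ z ∈ Metric.ball (0 : ℂ) ε, (b * z ^ k * wirtingerR P z).re = 0) :
    b = 0 := by
  have hP : ∀ z ∈ Metric.ball (0 : ℂ) ε, DifferentiableAt ℝ P z := fun z hz =>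
    (hPsm.contDiffAt (Metric.isOpen_ball.mem_nhds hz)).differentiableAt (by simp)
  by_contra hb
  by_cases hk : k = 1
  · subst hk
    have hre : b.re ≠ 0 := fun h => hexc ⟨rfl, h⟩
    have hre' : (b.re : ℂ) ≠ 0 := by exact_mod_cast hre
    refine false_of_tangent_curve hε hP hP0 hPpos heq (z₀ := ((ε / 2 : ℝ) : ℂ))
      (a := ((-1 / b.re : ℝ) : ℂ) * b) ?_ ?_ ?_ ?_
    · rw [mem_ball_zero_iff, Complex.norm_real, Real.norm_of_nonneg (by positivity)]
      linarith
    · exact_mod_cast (half_pos hε).ne'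
    · rw [Complex.re_ofReal_mul, div_mul_cancel₀ _ hre]
      norm_num
    · intro s
      refine ⟨-1 / b.re, ?_⟩
      rw [pow_one]
      ring
  · obtain ⟨u, hu, hbu⟩ := exists_invariant_direction hb hk
    have hu0 : u ≠ 0 := by
      rintro rfl
      simp at hu
    refine false_of_tangent_curve hε hP hP0 hPpos heq (z₀ := ((ε / 2 : ℝ) : ℂ) * u)
      (a := -1) ?_ ?_ (by simp) ?_
    · rw [mem_ball_zero_iff, norm_mul, hu, Complex.norm_real,
        Real.norm_of_nonneg (by positivity)]
      linarith
    · exact mul_ne_zero (by exact_mod_cast (half_pos hε).ne') hu0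
    · intro s
      -- The point of the ray at time `s` is `r u`, where `b (r u) ^ k = r ^ k |b| u`.
      obtain ⟨r, hr, hr'⟩ : ∃ r : ℝ, 0 < r ∧
          ((ε / 2 : ℝ) : ℂ) * u * Complex.exp (-1 * s) = r * u := by
        refine ⟨ε / 2 * Real.exp (-1 * s), by positivity, ?_⟩
        push_cast
        ring
      have hb' : (‖b‖ : ℂ) ≠ 0 := by simpa using hb
      have hrc : (r : ℂ) ≠ 0 := by exact_mod_cast hr.ne'
      refine ⟨-r / (r ^ k * ‖b‖), ?_⟩
      rw [hr', mul_pow, mul_left_comm b, hbu]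
      push_cast
      field_simp
end
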